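/- There exists a 93×93 matrix with all entries equal to 1 or -1 whose determinant equals 2^92 · 23^45 · 231. Consequently md(93) ≥ 2^92 · 23^45 · 231. -/

import Mathlib

/-- `md n` is the maximal determinant of an `n × n` matrix all of whose
entries are `1` or `-1`. -/
noncomputable def md (n : ℕ) : ℤ :=
  sSup {d : ℤ | ∃ M : Matrix (Fin n) (Fin n) ℤ,
    (∀ i j, M i j = 1 ∨ M i j = -1) ∧ M.det = d}

/-! Border a Hadamard matrix `W` of order `N = 2 (k + 1)` by a column `u`, a row `-vᵀ` and a corner
`1`, where `u` and `v` are sign vectors. The result has determinant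
`det (W + u vᵀ) = ± N ^ k (N + uᵀ W v)`, because `(W + u vᵀ) Wᵀ` is a rank-one perturbation of the
scalar matrix `N` and `det W = ± N ^ (k + 1)`. Taking for `u` the signs of `W v` turns `uᵀ W v` into
`∑ |(W v) i|`. For `N = 92` we take Williamson's array on four symmetric circulants of order 23 and
a `v` for which this sum is 832; then `92 ^ 45 * (92 + 832) = 2 ^ 92 * 23 ^ 45 * 231`. -/

open Matrix

section Doubling

variable {n R : Type*}

/-- The Cayley-Dickson style doubling `[[X, Y], [-Yᴴ, Xᴴ]]` of a pair of matrices, mirroring the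
representation of quaternions by pairs of complex numbers. -/
def cayleyDickson [Neg R] [Star R] (X Y : Matrix n n R) : Matrix (n ⊕ n) (n ⊕ n) R :=
  fromBlocks X Y (-Yᴴ) Xᴴ

variable [Ring R] [StarRing R]

theorem cayleyDickson_apply_mem_unitary {X Y : Matrix n n R} (hX : ∀ i j, X i j ∈ unitary R)
    (hY : ∀ i j, Y i j ∈ unitary R) (i j : n ⊕ n) : cayleyDickson X Y i j ∈ unitary R := by
  have neg_star_mem {x : R} (hx : x ∈ unitary R) : -star x ∈ unitary R :=
    (-star (⟨x, hx⟩ : unitary R)).2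
  rcases i with i | i <;> rcases j with j | j
  exacts [hX i j, hY i j, neg_star_mem (hY j i), Unitary.star_mem (hX j i)]

variable [Fintype n]

theorem cayleyDickson_mul_conjTranspose {X Y : Matrix n n R} (hX : IsStarNormal X)
    (hY : IsStarNormal Y) (hXY : Commute X Y) :
    cayleyDickson X Y * (cayleyDickson X Y)ᴴ =
      fromBlocks (X * Xᴴ + Y * Yᴴ) 0 0 (X * Xᴴ + Y * Yᴴ) := by
  have star_mul_X : Xᴴ * X = X * Xᴴ := hX.star_comm_self
  have star_mul_Y : Yᴴ * Y = Y * Yᴴ := hY.star_comm_self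
  have star_comm : Yᴴ * Xᴴ = Xᴴ * Yᴴ := hXY.star_star.symm
  simp [cayleyDickson, fromBlocks_conjTranspose, fromBlocks_multiply, star_mul_X,
    star_mul_Y, star_comm, hXY.eq, add_comm]

theorem isStarNormal_cayleyDickson {A B : Matrix n n R} (hA : A.IsHermitian)
    (hB : B.IsHermitian) (hAB : Commute A B) : IsStarNormal (cayleyDickson A B) := by
  refine ⟨?_⟩
  simp [commute_iff_eq, star_eq_conjTranspose, cayleyDickson, fromBlocks_conjTranspose,
    fromBlocks_multiply, hA.eq, hB.eq, hAB.eq]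

theorem commute_cayleyDickson {A B C D : Matrix n n R} (hA : A.IsHermitian) (hB : B.IsHermitian)
    (hC : C.IsHermitian) (hD : D.IsHermitian) (hAC : Commute A C) (hAD : Commute A D)
    (hBC : Commute B C) (hBD : Commute B D) :
    Commute (cayleyDickson A B) (cayleyDickson C D) := by
  simp [commute_iff_eq, cayleyDickson, fromBlocks_multiply, hA.eq, hB.eq, hC.eq, hD.eq, hAC.eq,
    hAD.eq, hBC.eq, hBD.eq, add_comm]

end Doubling

section Williamson

variable {n R : Type*}

/-- Williamson's array `[[A, B, C, D], [-B, A, -D, C], [-C, D, A, -B], [-D, -C, B, A]]` (for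
Hermitian blocks), built as an iterated doubling. -/
def williamsonArray [Neg R] [Star R] (A : Fin 4 → Matrix n n R) :
    Matrix ((n ⊕ n) ⊕ (n ⊕ n)) ((n ⊕ n) ⊕ (n ⊕ n)) R :=
  cayleyDickson (cayleyDickson (A 0) (A 1)) (cayleyDickson (A 2) (A 3))

variable [Fintype n] [DecidableEq n]

theorem williamsonArray_mul_conjTranspose [Ring R] [StarRing R] {A : Fin 4 → Matrix n n R} {c : R}
    (hA : ∀ k, (A k).IsHermitian) (hcomm : ∀ k l, Commute (A k) (A l))
    (hsum : ∑ k, A k * A k = c • (1 : Matrix n n R)) :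
    williamsonArray A * (williamsonArray A)ᴴ = c • 1 := by
  have normal (k) : IsStarNormal (A k) := (hA k).isSelfAdjoint.isStarNormal
  rw [williamsonArray, cayleyDickson_mul_conjTranspose
    (isStarNormal_cayleyDickson (hA 0) (hA 1) (hcomm 0 1))
    (isStarNormal_cayleyDickson (hA 2) (hA 3) (hcomm 2 3))
    (commute_cayleyDickson (hA 0) (hA 1) (hA 2) (hA 3) (hcomm 0 2) (hcomm 0 3) (hcomm 1 2)
      (hcomm 1 3)),
    cayleyDickson_mul_conjTranspose (normal 0) (normal 1) (hcomm 0 1),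
    cayleyDickson_mul_conjTranspose (normal 2) (normal 3) (hcomm 2 3)]
  simp only [Fin.sum_univ_four, add_assoc] at hsum
  simp only [(hA _).eq, fromBlocks_add, add_zero, add_assoc, hsum]
  simp only [← fromBlocks_one, fromBlocks_smul, smul_zero]

theorem isHadamard_williamsonArray [CommRing R] [StarRing R] {A : Fin 4 → Matrix n n R}
    (hunit : ∀ k i j, A k i j ∈ unitary R) (hA : ∀ k, (A k).IsHermitian)
    (hcomm : ∀ k l, Commute (A k) (A l))
    (hsum : ∑ k, A k * A k = (4 * Fintype.card n : R) • (1 : Matrix n n R))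
    (hcard : IsRegular (4 * Fintype.card n : R)) : (williamsonArray A).IsHadamard := by
  have card_eq : (Fintype.card ((n ⊕ n) ⊕ (n ⊕ n)) : R) = 4 * Fintype.card n := by
    simp only [Fintype.card_sum, Nat.cast_add]; ring
  apply IsHadamard.of_mul_conjTranspose
  · exact cayleyDickson_apply_mem_unitary (cayleyDickson_apply_mem_unitary (hunit 0) (hunit 1))
      (cayleyDickson_apply_mem_unitary (hunit 2) (hunit 3))
  · rw [williamsonArray_mul_conjTranspose hA hcomm hsum, card_eq]
  · rwa [card_eq]

theorem isHadamard_williamsonArray_circulant {G : Type*} [AddCommGroup G] [Fintype G]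
    [DecidableEq G] [CommRing R] [StarRing R] {a : Fin 4 → G → R}
    (hunit : ∀ k i, a k i ∈ unitary R) (hsymm : ∀ k i, star (a k (-i)) = a k i)
    (hsum : ∑ k, circulant (a k) *ᵥ a k = Pi.single 0 (4 * Fintype.card G : R))
    (hcard : IsRegular (4 * Fintype.card G : R)) :
    (williamsonArray fun k => circulant (a k)).IsHadamard := by
  refine isHadamard_williamsonArray (fun k i j => hunit k (i - j)) (fun k => ?_)
    (fun k l => circulant_mul_comm (a k) (a l)) ?_ hcard
  · rw [IsHermitian, conjTranspose_circulant]
    exact congrArg circulant (funext (hsymm k))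
  · simp only [circulant_mul]
    calc ∑ k, circulant (circulant (a k) *ᵥ a k)
        = circulant (∑ k, circulant (a k) *ᵥ a k) := by
          simp only [Fin.sum_univ_four, circulant_add]
      _ = (4 * Fintype.card G : R) • 1 := by
          rw [hsum, circulant_single, smul_one_eq_diagonal]; rfl

end Williamson

section Bordering

variable {n : Type*} [Fintype n] [DecidableEq n]

theorem det_smul_one_add_vecMulVec {R : Type*} [CommRing R] (c : R) (u v : n → R) :
    (c • (1 : Matrix n n R) + vecMulVec u v).det =
      c ^ Fintype.card n + (u ⬝ᵥ v) * c ^ (Fintype.card n - 1) := by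
  have h := eval_charpoly (vecMulVec (-u) v) c
  rw [charpoly_vecMulVec] at h
  simpa [scalar_apply, smul_one_eq_diagonal] using h.symm

theorem det_add_vecMulVec_mul_star_det {R : Type*} [CommRing R] [StarRing R] {W : Matrix n n R}
    (hW : W.IsHadamard) (u v : n → R) :
    (W + vecMulVec u v).det * star W.det =
      (Fintype.card n : R) ^ Fintype.card n +
        (u ⬝ᵥ v ᵥ* Wᴴ) * (Fintype.card n : R) ^ (Fintype.card n - 1) := by
  rw [← det_conjTranspose, ← det_mul, add_mul, hW.mul_conjTranspose, vecMulVec_mul,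
    det_smul_one_add_vecMulVec]

variable {W : Matrix n n ℤ} {k : ℕ}

theorem abs_det_of_isHadamard (hW : W.IsHadamard) (hk : Fintype.card n = 2 * k) :
    |W.det| = (Fintype.card n : ℤ) ^ k := by
  have hsq : W.det ^ 2 = ((Fintype.card n : ℤ) ^ k) ^ 2 := by
    rw [sq, ← pow_mul, mul_comm k, ← hk]
    simpa only [star_trivial] using hW.det_mul_star_det
  rw [sq_eq_sq_iff_abs_eq_abs] at hsq
  rw [hsq, abs_of_nonneg (by positivity)]

theorem abs_det_add_vecMulVec (hW : W.IsHadamard) (hk : Fintype.card n = 2 * (k + 1))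
    (u v : n → ℤ) :
    |(W + vecMulVec u v).det| = (Fintype.card n : ℤ) ^ k * |Fintype.card n + u ⬝ᵥ W *ᵥ v| := by
  have hpos : 0 < (Fintype.card n : ℤ) := by rw [hk]; positivity
  have hdet : (W + vecMulVec u v).det * W.det =
      (Fintype.card n : ℤ) ^ (2 * k + 1) * (Fintype.card n + u ⬝ᵥ W *ᵥ v) := by
    have h := det_add_vecMulVec_mul_star_det hW u v
    rw [star_trivial, conjTranspose_eq_transpose_of_trivial, vecMul_transpose] at h
    rw [h, show Fintype.card n = 2 * k + 1 + 1 by lia]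
    simp only [Nat.add_sub_cancel]
    ring
  refine mul_right_cancel₀ (pow_ne_zero (k + 1) hpos.ne') ?_
  rw [← abs_det_of_isHadamard hW hk, ← abs_mul, hdet, abs_mul, abs_of_pos (pow_pos hpos _),
    abs_det_of_isHadamard hW hk]
  ring

theorem exists_bordered_abs_det_eq (hW : W.IsHadamard) (hk : Fintype.card n = 2 * (k + 1))
    {v : n → ℤ} (hv : ∀ i, v i = 1 ∨ v i = -1) :
    ∃ M : Matrix (n ⊕ Unit) (n ⊕ Unit) ℤ, (∀ i j, M i j = 1 ∨ M i j = -1) ∧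
      |M.det| = (Fintype.card n : ℤ) ^ k * (Fintype.card n + ∑ i, |(W *ᵥ v) i|) := by
  let u : n → ℤ := fun i => if 0 ≤ (W *ᵥ v) i then 1 else -1
  have hu (i) : u i = 1 ∨ u i = -1 := ite_eq_or_eq _ _ _
  have u_dotProduct : u ⬝ᵥ W *ᵥ v = ∑ i, |(W *ᵥ v) i| := by
    refine Finset.sum_congr rfl fun i _ => ?_
    by_cases hi : 0 ≤ (W *ᵥ v) i
    · simp [u, hi, abs_of_nonneg]
    · simp [u, hi, abs_of_neg (not_le.mp hi)]
  refine ⟨fromBlocks W (replicateCol Unit u) (-replicateRow Unit v) 1, ?_, ?_⟩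
  · rintro (i | i) (j | j)
    · exact Unitary.mem_iff_eq_one_or_eq_neg_one.mp (hW.apply_mem i j)
    · exact hu i
    · simpa [neg_eq_iff_eq_neg, or_comm] using hv j
    · exact .inl rfl
  · rw [det_fromBlocks_one₂₂, Matrix.mul_neg, sub_neg_eq_add, ← vecMulVec_eq,
      abs_det_add_vecMulVec hW hk, u_dotProduct, abs_of_nonneg (a := _ + _) (by positivity)]

end Bordering

section MaximalDeterminant

theorem exists_sign_matrix_det_eq_abs {ι : Type*} [Fintype ι] [DecidableEq ι] {n : ℕ}
    (hι : Fintype.card ι = n) (hn : Odd n) {M : Matrix ι ι ℤ}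
    (hM : ∀ i j, M i j = 1 ∨ M i j = -1) :
    ∃ M' : Matrix (Fin n) (Fin n) ℤ, (∀ i j, M' i j = 1 ∨ M' i j = -1) ∧ M'.det = |M.det| := by
  let e := Fintype.equivFinOfCardEq hι
  rcases abs_choice M.det with h | h
  · exact ⟨reindex e e M, fun _ _ => hM _ _, by rw [h, det_reindex_self]⟩
  · refine ⟨-reindex e e M, fun i j => ?_, ?_⟩
    · simpa [neg_eq_iff_eq_neg, or_comm] using hM (e.symm i) (e.symm j)
    · rw [h, det_neg, Fintype.card_fin, hn.neg_one_pow, neg_one_mul, det_reindex_self]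

theorem bddAbove_det_sign_matrix (n : ℕ) :
    BddAbove {d : ℤ | ∃ M : Matrix (Fin n) (Fin n) ℤ,
      (∀ i j, M i j = 1 ∨ M i j = -1) ∧ M.det = d} := by
  refine ⟨(Fintype.card (Fin n)).factorial • 1 ^ Fintype.card (Fin n), ?_⟩
  rintro _ ⟨M, hM, rfl⟩
  have abs_entry_le (i j) : AbsoluteValue.abs (M i j) ≤ 1 := by
    rcases hM i j with h | h <;> simp [h]
  exact (le_abs_self _).trans (det_le abs_entry_le)

theorem det_le_md {n : ℕ} {M : Matrix (Fin n) (Fin n) ℤ} (hM : ∀ i j, M i j = 1 ∨ M i j = -1) :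
    M.det ≤ md n :=
  le_csSup (bddAbove_det_sign_matrix n) ⟨M, hM, rfl⟩

end MaximalDeterminant

section OrderNinetyTwo

/-- The symmetric sign vector taking the value `-1` exactly on `S ∪ -S`. -/
def symmSign {G : Type*} [DecidableEq G] [Neg G] (S : Finset G) (i : G) : ℤ :=
  if i ∈ S ∨ -i ∈ S then -1 else 1

theorem symmSign_eq_or {G : Type*} [DecidableEq G] [Neg G] (S : Finset G) (i : G) :
    symmSign S i = 1 ∨ symmSign S i = -1 :=
  (ite_eq_or_eq _ _ _).symm

theorem symmSign_neg {G : Type*} [DecidableEq G] [InvolutiveNeg G] (S : Finset G) (i : G) :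
    symmSign S (-i) = symmSign S i := by
  simp only [symmSign, neg_neg, or_comm]

/-- First rows of a Williamson quadruple of order 23: four symmetric sign vectors whose periodic
autocorrelations sum to zero away from the origin. They were found by exhaustive search. -/
def williamsonRow (k : Fin 4) : Fin 23 → ℤ :=
  symmSign ((![{1, 2, 5, 7, 9, 10, 11}, {1, 3, 4, 10, 11}, {1, 5, 6, 9, 11}, {5, 8, 9, 10}] :
    Fin 4 → Finset (Fin 23)) k)

/-- The Hadamard matrix of order 92 obtained from `williamsonRow`. -/
def hadamard92 : Matrix ((Fin 23 ⊕ Fin 23) ⊕ (Fin 23 ⊕ Fin 23))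
    ((Fin 23 ⊕ Fin 23) ⊕ (Fin 23 ⊕ Fin 23)) ℤ :=
  williamsonArray fun k => circulant (williamsonRow k)

/-- The sign vector used to border `hadamard92`, found by simulated annealing among the vectors with
symmetric blocks. -/
def border92 : (Fin 23 ⊕ Fin 23) ⊕ (Fin 23 ⊕ Fin 23) → ℤ :=
  Sum.elim
    (Sum.elim (symmSign {7, 8, 9, 10, 11}) (symmSign {1, 2, 3, 6, 7, 8, 11}))
    (Sum.elim (symmSign {1, 2, 6, 7, 8, 10}) (symmSign {0, 5, 8, 9, 10, 11}))

theorem sum_circulant_mulVec_williamsonRow :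
    ∑ k, circulant (williamsonRow k) *ᵥ williamsonRow k = Pi.single 0 (4 * 23) := by
  have h : ∀ i, (∑ k, circulant (williamsonRow k) *ᵥ williamsonRow k) i =
      (Pi.single 0 (4 * 23) : Fin 23 → ℤ) i := by decide +kernel
  exact funext h

theorem isHadamard_hadamard92 : hadamard92.IsHadamard :=
  isHadamard_williamsonArray_circulant
    (fun _ i => Unitary.mem_iff_eq_one_or_eq_neg_one.mpr (symmSign_eq_or _ i))
    (fun _ i => symmSign_neg _ i) (by simpa using sum_circulant_mulVec_williamsonRow)
    (IsRegular.of_ne_zero (by norm_num))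

theorem border92_eq_or : ∀ i, border92 i = 1 ∨ border92 i = -1 := by
  rintro ((i | i) | (i | i)) <;> exact symmSign_eq_or _ i

theorem sum_abs_hadamard92_mulVec_border92 : ∑ i, |(hadamard92 *ᵥ border92) i| = 832 := by
  decide +kernel

end OrderNinetyTwo

theorem stmt_17 :
    (∃ M : Matrix (Fin 93) (Fin 93) ℤ,
      (∀ i j, M i j = 1 ∨ M i j = -1) ∧ M.det = 2^92 * 23^45 * 231) ∧
    (2^92 * 23^45 * 231 : ℤ) ≤ md 93 := by
  obtain ⟨B, hB, hBdet⟩ :=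
    exists_bordered_abs_det_eq (k := 45) isHadamard_hadamard92 (by simp) border92_eq_or
  obtain ⟨M, hM, hMdet⟩ := exists_sign_matrix_det_eq_abs (n := 93) (by simp) (by decide) hB
  have hdet : M.det = 2 ^ 92 * 23 ^ 45 * 231 := by
    rw [hMdet, hBdet, sum_abs_hadamard92_mulVec_border92]
    norm_num
  exact ⟨⟨M, hM, hdet⟩, hdet ▸ det_le_md hM⟩
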